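/- Let S be a stabilizer group in the n-qubit Pauli group with codespace projector Π = |S|⁻¹ • Σ_{S ∈ S} S, and suppose every element of N(S) \ ⟨i⟩S has weight ≥ d. Then every Pauli error E ∈ P_n with w(E) < d is detectable: Π * E * Π = c • Π for some scalar c ∈ ℂ (with c = 0 when E ∉ N(S)). -/

import Mathlib

/-!
Two Pauli operators either commute or anticommute: this holds for the generators
(`pauliGens_comm_or_anticomm`) and, for a fixed partner, the operators with this property form a
subgroup (`pauli_comm_or_anticomm`). The projector `Π` absorbs every element of `S` on either side
(`mul_codeProj`, `codeProj_mul`), and is therefore idempotent.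

If `E ∈ N(S)`, its weight forces `E = i^λ g` with `g ∈ S`, so `Π E Π = i^λ Π`. Otherwise some
`g ∈ S` anticommutes with `E`, and `Π E Π = Π E g Π = -Π g E Π = -Π E Π`, so `Π E Π = 0`.
-/

open Matrix Complex
open scoped Classical

noncomputable section

/-- The space of `n`-qubit operators. -/
abbrev MatN (n : ℕ) : Type := Matrix (Fin n → Fin 2) (Fin n → Fin 2) ℂ

/-- The Pauli matrix `X`. -/
def PX : Matrix (Fin 2) (Fin 2) ℂ := !![0, 1; 1, 0]

/-- The Pauli matrix `Z`. -/
def PZ : Matrix (Fin 2) (Fin 2) ℂ := !![1, 0; 0, -1]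

/-- The single-qubit operator `M` acting on the tensor factor `q` and as the identity on
all other factors. -/
def actQ {Q : Type*} (q : Q) (M : Matrix (Fin 2) (Fin 2) ℂ) :
    Matrix (Q → Fin 2) (Q → Fin 2) ℂ :=
  fun v w => M (v q) (w q) * (if ∀ k, k ≠ q → v k = w k then 1 else 0)

/-- The Pauli `X` operator on the `j`-th qubit. -/
def Xop (n : ℕ) (j : Fin n) : MatN n := actQ j PX

/-- The Pauli `Z` operator on the `j`-th qubit. -/
def Zop (n : ℕ) (j : Fin n) : MatN n := actQ j PZ

/-- Generators of the Pauli group: `i • 1` and all `X_j`, `Z_j` (as units of the matrix ring). -/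
def pauliGens (n : ℕ) : Set (MatN n)ˣ :=
  {u | (u : MatN n) = Complex.I • 1 ∨ (∃ j, (u : MatN n) = Xop n j) ∨
    ∃ j, (u : MatN n) = Zop n j}

/-- The `n`-qubit Pauli group `P_n`: the subgroup of the units of the matrix ring generated by
`i • 1` together with all `X_j` and `Z_j`. -/
def PauliGroup (n : ℕ) : Subgroup (MatN n)ˣ := Subgroup.closure (pauliGens n)

/-- `X^a = ∏ⱼ X_j^(a_j)` for `a : Fin n → ZMod 2`. -/
def XpowVec (n : ℕ) (a : Fin n → ZMod 2) : MatN n :=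
  (List.ofFn fun j => Xop n j ^ (a j).val).prod

/-- `Z^b = ∏ⱼ Z_j^(b_j)` for `b : Fin n → ZMod 2`. -/
def ZpowVec (n : ℕ) (b : Fin n → ZMod 2) : MatN n :=
  (List.ofFn fun j => Zop n j ^ (b j).val).prod

/-- The codespace projector `Π = |S|⁻¹ • Σ_{g ∈ S} g`. -/
def codeProj (n : ℕ) (S : Subgroup (MatN n)ˣ) : MatN n :=
  (Nat.card ↥S : ℂ)⁻¹ • ∑ᶠ g ∈ (S : Set (MatN n)ˣ), (g : MatN n)

/-- The set `⟨i⟩S = {i^λ • S | λ ∈ ZMod 4, S ∈ S}` of stabilizers up to phase. -/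
def phaseStab (n : ℕ) (S : Subgroup (MatN n)ˣ) : Set (MatN n) :=
  {M | ∃ lam : ZMod 4, ∃ g ∈ S, M = Complex.I ^ lam.val • ((g : (MatN n)ˣ) : MatN n)}

/-- The centralizer `N(S)` of the stabilizer group `S` in the Pauli group `P_n`,
as a set of matrices. -/
def NSmat (n : ℕ) (S : Subgroup (MatN n)ˣ) : Set (MatN n) :=
  {M | (∃ u ∈ PauliGroup n, (u : MatN n) = M) ∧
    ∀ g ∈ S, M * (g : MatN n) = (g : MatN n) * M}

/-- The weight of a Pauli operator: writing `P = i^λ • (X^a * Z^b)`, the number of indices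
`j` with `(a_j, b_j) ≠ (0, 0)`, i.e. the number of tensor factors on which `P` acts
nontrivially. -/
def pauliWeight (n : ℕ) (P : MatN n) : ℕ :=
  sInf {w | ∃ (lam : ZMod 4) (a b : Fin n → ZMod 2),
    P = Complex.I ^ lam.val • (XpowVec n a * ZpowVec n b) ∧
    w = (Finset.univ.filter fun j => ¬(a j = 0 ∧ b j = 0)).card}

/-- Left multiplication by a one-qubit operator only sums over the value of qubit `j`. -/
theorem actQ_mul_apply {n : ℕ} (j : Fin n) (M : Matrix (Fin 2) (Fin 2) ℂ) (A : MatN n)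
    (v w : Fin n → Fin 2) :
    ((actQ j M : MatN n) * A) v w = ∑ x, M (v j) x * A (Function.update v j x) w := by
  rw [Matrix.mul_apply]
  symm
  refine Finset.sum_of_injOn (fun x => Function.update v j x) ?_ (by simp) ?_ ?_
  · exact (Function.update_injective v j).injOn
  · intro u _ hu
    have h : ¬ ∀ k, k ≠ j → v k = u k := by
      intro h
      refine hu ⟨u j, by simp, ?_⟩
      funext k
      by_cases hk : k = j
      · subst hk; simp
      · simp [hk, h k hk]
    simp only [actQ, if_neg h, mul_zero, zero_mul]
  · intro x _
    have h : ∀ k, k ≠ j → v k = Function.update v j x k := by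
      intro k hk; simp [hk]
    simp only [actQ, if_pos h, Function.update_self, mul_one]

theorem actQ_mul_same {n : ℕ} (j : Fin n) (M N : Matrix (Fin 2) (Fin 2) ℂ) :
    (actQ j M : MatN n) * actQ j N = actQ j (M * N) := by
  ext v w
  rw [actQ_mul_apply]
  simp only [actQ, Function.update_self, Matrix.mul_apply, Finset.sum_mul]
  refine Finset.sum_congr rfl fun x _ => ?_
  have h : (∀ k, k ≠ j → Function.update v j x k = w k) ↔ ∀ k, k ≠ j → v k = w k :=
    forall₂_congr fun k hk => by simp [hk]
  simp only [h, mul_assoc]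
  congr

/-- The entries are symmetric in the two factors, whence operators on distinct qubits commute. -/
theorem actQ_mul_of_ne {n : ℕ} {j k : Fin n} (hjk : j ≠ k) (M N : Matrix (Fin 2) (Fin 2) ℂ)
    (v w : Fin n → Fin 2) :
    ((actQ j M : MatN n) * actQ k N) v w =
      M (v j) (w j) * N (v k) (w k) * (if ∀ l, l ≠ j → l ≠ k → v l = w l then 1 else 0) := by
  rw [actQ_mul_apply, Finset.sum_eq_single (w j)]
  · have h : (∀ l, l ≠ k → Function.update v j (w j) l = w l) ↔
        ∀ l, l ≠ j → l ≠ k → v l = w l := by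
      refine forall_congr' fun l => ?_
      by_cases hl : l = j
      · subst hl; simp
      · simp [hl]
    simp only [actQ, h, Function.update_of_ne hjk.symm, mul_assoc]
  · intro x _ hx
    have h : ¬ ∀ l, l ≠ k → Function.update v j x l = w l := by
      intro h
      exact hx (by simpa using h j hjk)
    simp only [actQ, if_neg h, mul_zero]
  · simp

theorem actQ_comm_of_ne {n : ℕ} {j k : Fin n} (hjk : j ≠ k) (M N : Matrix (Fin 2) (Fin 2) ℂ) :
    (actQ j M : MatN n) * actQ k N = actQ k N * actQ j M := by
  ext v w
  rw [actQ_mul_of_ne hjk, actQ_mul_of_ne hjk.symm, mul_comm (M _ _)]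
  congr 2
  exact propext (forall_congr' fun l => forall_comm)

theorem PX_mul_PZ : PX * PZ = -(PZ * PX) := by
  ext i j
  fin_cases i <;> fin_cases j <;> simp [PX, PZ, Matrix.mul_apply]

theorem actQ_neg {n : ℕ} (j : Fin n) (M : Matrix (Fin 2) (Fin 2) ℂ) :
    (actQ j (-M) : MatN n) = -actQ j M := by
  ext v w
  simp only [actQ, Matrix.neg_apply, neg_mul]

theorem Xop_mul_Zop {n : ℕ} (j k : Fin n) :
    Xop n j * Zop n k = Zop n k * Xop n j ∨ Xop n j * Zop n k = -(Zop n k * Xop n j) := by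
  by_cases h : j = k
  · subst h
    right
    simp only [Xop, Zop, actQ_mul_same, PX_mul_PZ, actQ_neg]
  · exact Or.inl (actQ_comm_of_ne h _ _)

theorem actQ_comm_same_op {n : ℕ} (j k : Fin n) (M : Matrix (Fin 2) (Fin 2) ℂ) :
    (actQ j M : MatN n) * actQ k M = actQ k M * actQ j M := by
  by_cases h : j = k
  · rw [h]
  · exact actQ_comm_of_ne h _ _

theorem pauliGens_comm_or_anticomm {n : ℕ} {u v : (MatN n)ˣ} (hu : u ∈ pauliGens n)
    (hv : v ∈ pauliGens n) : u * v = v * u ∨ u * v = -(v * u) := by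
  simp only [Units.ext_iff, Units.val_mul, Units.val_neg]
  rcases hu with hu | ⟨j, hu⟩ | ⟨j, hu⟩
  · left; simp [hu]
  all_goals
    rcases hv with hv | ⟨k, hv⟩ | ⟨k, hv⟩
    · left; simp [hv]
    all_goals rw [hu, hv]
  · exact Or.inl (actQ_comm_same_op _ _ _)
  · exact Xop_mul_Zop j k
  · rcases Xop_mul_Zop k j with h | h
    · exact Or.inl h.symm
    · right; rw [h, neg_neg]
  · exact Or.inl (actQ_comm_same_op _ _ _)

/-- The elements commuting or anticommuting with a given unit, as a subgroup. -/
def signCentralizer {n : ℕ} (v : (MatN n)ˣ) : Subgroup (MatN n)ˣ where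
  carrier := {u | u * v = v * u ∨ u * v = -(v * u)}
  one_mem' := by simp
  mul_mem' := by
    rintro a b (ha | ha) (hb | hb)
    · left; rw [mul_assoc, hb, ← mul_assoc, ha, mul_assoc]
    · right; rw [mul_assoc, hb, mul_neg, ← mul_assoc, ha, mul_assoc]
    · right; rw [mul_assoc, hb, ← mul_assoc, ha, neg_mul, mul_assoc]
    · left; rw [mul_assoc, hb, mul_neg, ← mul_assoc, ha, neg_mul, neg_neg, mul_assoc]
  inv_mem' := by
    rintro a (ha | ha)
    · left; rw [inv_mul_eq_iff_eq_mul, ← mul_assoc, ha, mul_inv_cancel_right]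
    · right
      rw [inv_mul_eq_iff_eq_mul, mul_neg, ← mul_assoc, ha, neg_mul, neg_neg,
        mul_inv_cancel_right]

theorem mem_signCentralizer_symm {n : ℕ} {u v : (MatN n)ˣ} (h : u ∈ signCentralizer v) :
    v ∈ signCentralizer u := by
  rcases h with h | h
  · exact Or.inl h.symm
  · right; rw [h, neg_neg]

/-- Closure induction in one argument at a time: first against a generator, then against any
Pauli operator, using that the relation is symmetric. -/
theorem pauli_comm_or_anticomm {n : ℕ} {u v : (MatN n)ˣ} (hu : u ∈ PauliGroup n)
    (hv : v ∈ PauliGroup n) : u * v = v * u ∨ u * v = -(v * u) := by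
  have key : ∀ g ∈ pauliGens n, PauliGroup n ≤ signCentralizer g := fun g hg =>
    (Subgroup.closure_le _).2 fun _ hw => pauliGens_comm_or_anticomm hw hg
  have : PauliGroup n ≤ signCentralizer v :=
    (Subgroup.closure_le _).2 fun w hw => mem_signCentralizer_symm (key w hw hv)
  exact this hu

theorem codeProj_eq_sum {n : ℕ} (S : Subgroup (MatN n)ˣ) [Fintype S] :
    codeProj n S = (Nat.card S : ℂ)⁻¹ • ∑ g : S, ((g : (MatN n)ˣ) : MatN n) := by
  rw [codeProj, ← finsum_eq_sum_of_fintype]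
  congr 1
  exact (finsum_set_coe_eq_finsum_mem (S : Set (MatN n)ˣ)
    (f := fun g : (MatN n)ˣ => (g : MatN n))).symm

theorem mul_codeProj {n : ℕ} (S : Subgroup (MatN n)ˣ) [Fintype S] {g : (MatN n)ˣ} (hg : g ∈ S) :
    (g : MatN n) * codeProj n S = codeProj n S := by
  rw [codeProj_eq_sum, mul_smul_comm, Finset.mul_sum]
  congr 1
  exact Fintype.sum_equiv (Equiv.mulLeft (⟨g, hg⟩ : S)) _ _ fun x => by simp

theorem codeProj_mul {n : ℕ} (S : Subgroup (MatN n)ˣ) [Fintype S] {g : (MatN n)ˣ} (hg : g ∈ S) :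
    codeProj n S * (g : MatN n) = codeProj n S := by
  rw [codeProj_eq_sum, smul_mul_assoc, Finset.sum_mul]
  congr 1
  exact Fintype.sum_equiv (Equiv.mulRight (⟨g, hg⟩ : S)) _ _ fun x => by simp

theorem codeProj_mul_self {n : ℕ} (S : Subgroup (MatN n)ˣ) [Fintype S] :
    codeProj n S * codeProj n S = codeProj n S := by
  conv_lhs => rw [codeProj_eq_sum S, smul_mul_assoc, Finset.sum_mul, ← codeProj_eq_sum S]
  rw [Finset.sum_congr rfl fun g _ => mul_codeProj S g.2, Finset.sum_const, Finset.card_univ,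
    ← Nat.card_eq_fintype_card, ← Nat.cast_smul_eq_nsmul ℂ, smul_smul,
    inv_mul_cancel₀ (Nat.cast_ne_zero.2 Nat.card_pos.ne'), one_smul]

/-- If every element of `N(S) \ ⟨i⟩S` has weight `≥ d`, then every Pauli error of weight
`< d` is detectable: `Π * E * Π = c • Π` for some scalar `c`, with `c = 0` when `E ∉ N(S)`. -/
theorem low_weight_error_detectable (n d : ℕ) (hn : 1 ≤ n)
    (S : Subgroup (MatN n)ˣ) (hS : S ≤ PauliGroup n)
    (habel : ∀ a ∈ S, ∀ b ∈ S, a * b = b * a)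
    (hneg : (-1 : (MatN n)ˣ) ∉ S)
    (hdist : ∀ M ∈ NSmat n S, M ∉ phaseStab n S → d ≤ pauliWeight n M)
    (E : (MatN n)ˣ) (hE : E ∈ PauliGroup n)
    (hw : pauliWeight n (E : MatN n) < d) :
    ∃ c : ℂ,
      codeProj n S * (E : MatN n) * codeProj n S = c • codeProj n S ∧
      ((E : MatN n) ∉ NSmat n S → c = 0) := by
  rcases finite_or_infinite S with hfin | hinf
  swap
  · -- For an infinite `S`, which cannot occur, `Nat.card S = 0` gives `Π = 0` by convention;
    -- this spares a proof that the Pauli group is finite.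
    exact ⟨0, by simp [codeProj], fun _ => rfl⟩
  have := Fintype.ofFinite S
  by_cases hN : (E : MatN n) ∈ NSmat n S
  · by_cases hP : (E : MatN n) ∈ phaseStab n S
    · obtain ⟨lam, g, hg, hEg⟩ := hP
      refine ⟨Complex.I ^ lam.val, ?_, fun h => absurd hN h⟩
      rw [hEg, mul_smul_comm, smul_mul_assoc, codeProj_mul S hg, codeProj_mul_self]
    · exact absurd (hdist _ hN hP) (not_le.2 hw)
  · refine ⟨0, ?_, fun _ => rfl⟩
    obtain ⟨g, hg, hne⟩ : ∃ g ∈ S, (E : MatN n) * (g : MatN n) ≠ (g : MatN n) * E := by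
      by_contra! h
      exact hN ⟨⟨E, hE, rfl⟩, h⟩
    have hanti : (E : MatN n) * (g : MatN n) = -((g : MatN n) * E) := by
      rcases pauli_comm_or_anticomm hE (hS hg) with h | h
      · exact absurd (by simpa using congrArg Units.val h) hne
      · simpa using congrArg Units.val h
    have h : codeProj n S * (E : MatN n) * codeProj n S =
        -(codeProj n S * (E : MatN n) * codeProj n S) := by
      calc codeProj n S * (E : MatN n) * codeProj n S
          = codeProj n S * (E : MatN n) * ((g : MatN n) * codeProj n S) := by
            rw [mul_codeProj S hg]
        _ = codeProj n S * ((E : MatN n) * (g : MatN n)) * codeProj n S := by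
            simp only [mul_assoc]
        _ = -(codeProj n S * (g : MatN n) * E * codeProj n S) := by
            rw [hanti]
            simp only [mul_neg, neg_mul, mul_assoc]
        _ = -(codeProj n S * (E : MatN n) * codeProj n S) := by
            rw [codeProj_mul S hg]
    rw [zero_smul]
    ext v w
    exact self_eq_neg.1 (congrFun (congrFun h v) w)
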